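/- arXiv:2605.20974 — 4 statements merged into one kernel-verified Lean document; each statement's English description precedes it below -/
import Mathlib

section
/- Let M be a cancellative commutative monoid. Then M is an FFM if and only if M is a BFM and an LFFM. -/
/-- The set of factorizations of `b` in `M`: multisets of irreducible elements of
`Associates M` whose product is the class of `b`. -/
def ZM {M : Type*} [CancelCommMonoid M] (b : M) : Set (Multiset (Associates M)) :=
  {z | (∀ a ∈ z, Irreducible a) ∧ z.prod = Associates.mk b}

/-- The set of length-`ℓ` factorizations of `b` in `M`. -/
def ZMLen {M : Type*} [CancelCommMonoid M] (b : M) (ℓ : ℕ) : Set (Multiset (Associates M)) :=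
  {z ∈ ZM b | Multiset.card z = ℓ}

/-- The set of lengths of factorizations of `b` in `M`. -/
def LM {M : Type*} [CancelCommMonoid M] (b : M) : Set ℕ :=
  {n | ∃ z ∈ ZM b, Multiset.card z = n}

/-- `M` is atomic if every element has a factorization. -/
def Atomic (M : Type*) [CancelCommMonoid M] : Prop :=
  ∀ b : M, (ZM b).Nonempty

/-- `M` is a bounded factorization monoid. -/
def IsBFM (M : Type*) [CancelCommMonoid M] : Prop :=
  ∀ b : M, (LM b).Nonempty ∧ (LM b).Finite

/-- `M` is a length-finite factorization monoid: atomic with all fixed-length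
fibers finite. -/
def IsLFFM (M : Type*) [CancelCommMonoid M] : Prop :=
  Atomic M ∧ ∀ (b : M) (ℓ : ℕ), (ZMLen b ℓ).Finite

/-- `M` is a finite factorization monoid. -/
def IsFFM (M : Type*) [CancelCommMonoid M] : Prop :=
  ∀ b : M, (ZM b).Nonempty ∧ (ZM b).Finite

section

variable {M : Type*} [CancelCommMonoid M]

theorem LM_eq_image_card (b : M) : LM b = Multiset.card '' ZM b :=
  rfl

theorem ZMLen_eq_inter_preimage_card (b : M) (ℓ : ℕ) :
    ZMLen b ℓ = ZM b ∩ Multiset.card ⁻¹' {ℓ} :=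
  rfl

theorem LM_nonempty_iff {b : M} : (LM b).Nonempty ↔ (ZM b).Nonempty := by
  rw [LM_eq_image_card, Set.image_nonempty]

theorem ZM_finite_iff {b : M} :
    (ZM b).Finite ↔ (LM b).Finite ∧ ∀ ℓ, (ZMLen b ℓ).Finite := by
  simp only [LM_eq_image_card, ZMLen_eq_inter_preimage_card]
  constructor
  · intro hZ
    exact ⟨hZ.image _, fun ℓ ↦ hZ.inter_of_left _⟩
  · rintro ⟨hL, hfibers⟩
    exact .of_finite_fibers Multiset.card hL fun ℓ _ ↦ hfibers ℓ

end

/-- A cancellative commutative monoid is an FFM iff it is a BFM and an LFFM. -/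
theorem isFFM_iff_isBFM_and_isLFFM (M : Type*) [CancelCommMonoid M] :
    IsFFM M ↔ IsBFM M ∧ IsLFFM M := by
  constructor
  · intro hFFM
    have hatomic : Atomic M := fun b ↦ (hFFM b).1
    have hfinite (b : M) := ZM_finite_iff.mp (hFFM b).2
    exact ⟨fun b ↦ ⟨LM_nonempty_iff.mpr (hatomic b), (hfinite b).1⟩,
      hatomic, fun b ↦ (hfinite b).2⟩
  · rintro ⟨hBFM, hatomic, hfibers⟩ b
    exact ⟨hatomic b, ZM_finite_iff.mpr ⟨(hBFM b).2, hfibers b⟩⟩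
end

section
/- Let M be a cancellative commutative monoid. If M is a BFM and M is not an FFM, then there exist b ∈ M and ℓ ∈ ℕ such that the set Z_{M,ℓ}(b) of length-ℓ factorizations of b is infinite; moreover such a b is not a unit of M. -/
theorem eq_zero_of_forall_irreducible_of_isUnit_prod {N : Type*} [CommMonoid N] {z : Multiset N}
    (hirr : ∀ a ∈ z, Irreducible a) (hunit : IsUnit z.prod) : z = 0 :=
  Multiset.eq_zero_of_forall_notMem fun a ha =>
    (hirr a ha).not_isUnit (IsUnit.multisetProd_iff.1 hunit a ha)

section Factorizations

variable {M : Type*} [CancelCommMonoid M] {b : M}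

theorem LM_eq_image_card_ZM : LM b = Multiset.card '' ZM b := rfl

theorem ZMLen_eq_ZM_inter_preimage_card (ℓ : ℕ) :
    ZMLen b ℓ = ZM b ∩ Multiset.card ⁻¹' {ℓ} := rfl

theorem ZM_eq_singleton_zero_of_isUnit (hb : IsUnit b) : ZM b = {0} := by
  have hmk : Associates.mk b = 1 := Associates.mk_eq_one.2 hb
  refine Set.eq_singleton_iff_unique_mem.2 ⟨⟨by simp, by simp [hmk]⟩, ?_⟩
  rintro z ⟨hirr, hprod⟩
  have hunit : IsUnit z.prod := by simp [hprod, hmk]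
  exact eq_zero_of_forall_irreducible_of_isUnit_prod hirr hunit

theorem not_isUnit_of_infinite_ZM (hinf : (ZM b).Infinite) : ¬ IsUnit b := fun hb =>
  hinf (ZM_eq_singleton_zero_of_isUnit hb ▸ Set.finite_singleton 0)

theorem exists_infinite_ZMLen_of_finite_LM (hL : (LM b).Finite) (hinf : (ZM b).Infinite) :
    ∃ ℓ, (ZMLen b ℓ).Infinite := by
  by_contra! hfin
  rw [LM_eq_image_card_ZM] at hL
  refine hinf (Set.Finite.of_finite_fibers Multiset.card hL fun ℓ _ => ?_)
  rw [← ZMLen_eq_ZM_inter_preimage_card]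
  exact hfin ℓ

theorem exists_infinite_ZM_of_not_isFFM (hne : ∀ b : M, (LM b).Nonempty) (hnFFM : ¬ IsFFM M) :
    ∃ b : M, (ZM b).Infinite := by
  by_contra! hfin
  simp only [LM_eq_image_card_ZM, Set.image_nonempty] at hne
  exact hnFFM fun b => ⟨hne b, hfin b⟩

end Factorizations

/-- If `M` is a BFM that is not an FFM, then some element `b`, which is not a unit,
has an infinite set of length-`ℓ` factorizations for some `ℓ`. -/
theorem exists_infinite_fixed_length_fiber (M : Type*) [CancelCommMonoid M]
    (hBFM : IsBFM M) (hnFFM : ¬ IsFFM M) :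
    ∃ b : M, ∃ ℓ : ℕ, (ZMLen b ℓ).Infinite ∧ ¬ IsUnit b := by
  obtain ⟨b, hZ⟩ := exists_infinite_ZM_of_not_isFFM (fun b => (hBFM b).1) hnFFM
  obtain ⟨ℓ, hℓ⟩ := exists_infinite_ZMLen_of_finite_LM (hBFM b).2 hZ
  exact ⟨b, ℓ, hℓ, not_isUnit_of_infinite_ZM hZ⟩
end

section
/- Let G be a commutative group, N ≤ G a submonoid, b ∈ N, ℓ ∈ ℕ, and Ω ⊆ Z_{N,ℓ}(b). Let (S_i)_{i ∈ Λ} be a nonempty family of Ω-admissible submonoids of G containing N that forms a chain under the order ≼ (S₁ ≼ S₂ iff S₁ ≤ S₂ and every element of S₁ that is a unit of ↥S₂ is a unit of ↥S₁). Then the union S = ⋃_{i} S_i is an Ω-admissible submonoid over N and S_i ≼ S for every i ∈ Λ. -/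
/-- The set of factorizations of `b` in the submonoid `S` of the group `G`. -/
def ZSet {G : Type*} [CommGroup G] (S : Submonoid G) (b : S) :
    Set (Multiset (Associates S)) :=
  {z | (∀ a ∈ z, Irreducible a) ∧ z.prod = Associates.mk b}

/-- The set of length-`ℓ` factorizations of `b` in `S`. -/
def ZSetLen {G : Type*} [CommGroup G] (S : Submonoid G) (b : S) (ℓ : ℕ) :
    Set (Multiset (Associates S)) :=
  {z ∈ ZSet S b | Multiset.card z = ℓ}

/-- `u` is a unit of the submonoid `S` of the group `G`: `u⁻¹ ∈ S`. -/
def IsUnitIn {G : Type*} [CommGroup G] (S : Submonoid G) (u : G) : Prop :=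
  u⁻¹ ∈ S

/-- `S` is unit-reflecting over `N`. -/
def UnitReflecting {G : Type*} [CommGroup G] (N S : Submonoid G) : Prop :=
  ∀ u ∈ S, IsUnitIn S u → ∀ x ∈ N, ∀ y ∈ N, u * y = x → u ∈ N ∧ IsUnitIn N u

/-- `S` is `Ω`-admissible over `N`: `N ≤ S`, `S` is unit-reflecting over `N`, and
every `a ∈ N` whose class in `Associates ↥N` occurs in some `z ∈ Ω` has irreducible
class in `Associates ↥S`. -/
def OmegaAdmissible {G : Type*} [CommGroup G] (N S : Submonoid G)
    (Ω : Set (Multiset (Associates N))) : Prop :=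
  N ≤ S ∧ UnitReflecting N S ∧
    ∀ (a : G) (haN : a ∈ N) (haS : a ∈ S),
      (∃ z ∈ Ω, Associates.mk (⟨a, haN⟩ : N) ∈ z) →
        Irreducible (Associates.mk (⟨a, haS⟩ : S))

/-- The survival order: `S₁ ≼ S₂` iff `S₁ ≤ S₂` and every element of `S₁` that is a
unit of `↥S₂` is a unit of `↥S₁`. -/
def Prec {G : Type*} [CommGroup G] (S₁ S₂ : Submonoid G) : Prop :=
  S₁ ≤ S₂ ∧ ∀ u ∈ S₁, IsUnitIn S₂ u → IsUnitIn S₁ u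

/-!
Any two elements of the union of a directed family of submonoids lie in a common member. Hence an
element and its inverse, or the two factors of a product, can be moved into a single member, where
unit-reflection and irreducibility are available. If the inverse of `u ∈ S i` lies in
some `S j`, then `u` is a unit of any common `Prec`-upper bound of `S i` and `S j`, hence of `S i`:
so the union is itself a `Prec`-upper bound.
-/

-- `Associates.irreducible_mk` requires a monoid with zero.
theorem irreducible_associatesMk_iff {M : Type*} [CommMonoid M] {a : M} :
    Irreducible (Associates.mk a) ↔ Irreducible a := by
  refine ⟨fun h => ⟨fun ha => h.not_isUnit (Associates.isUnit_mk.2 ha), ?_⟩,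
    fun h => ⟨fun ha => h.not_isUnit (Associates.isUnit_mk.1 ha), ?_⟩⟩
  · rintro x y rfl
    exact (h.isUnit_or_isUnit Associates.mk_mul_mk.symm).imp
      Associates.isUnit_mk.1 Associates.isUnit_mk.1
  · simp only [Associates.forall_associated, Associates.mk_mul_mk, Associates.isUnit_mk,
      Associates.mk_eq_mk_iff_associated]
    intro x y hxy
    exact (hxy.irreducible h).isUnit_or_isUnit rfl

section DirectedUnion

variable {M : Type*} [Monoid M] {ι : Sort*} [Nonempty ι] {S : ι → Submonoid M}

theorem exists_mem_mem_of_mem_iSup_of_directed (hS : Directed (· ≤ ·) S) {x y : M}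
    (hx : x ∈ ⨆ i, S i) (hy : y ∈ ⨆ i, S i) : ∃ i, x ∈ S i ∧ y ∈ S i := by
  obtain ⟨i, hxi⟩ := (Submonoid.mem_iSup_of_directed hS).1 hx
  obtain ⟨j, hyj⟩ := (Submonoid.mem_iSup_of_directed hS).1 hy
  obtain ⟨k, hik, hjk⟩ := hS i j
  exact ⟨k, hik hxi, hjk hyj⟩

theorem irreducible_iSup_of_directed (hS : Directed (· ≤ ·) S) {a : M} (ha : a ∈ ⨆ i, S i)
    (hirr : ∀ i (hai : a ∈ S i), Irreducible (⟨a, hai⟩ : S i)) :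
    Irreducible (⟨a, ha⟩ : (⨆ i, S i : Submonoid M)) := by
  refine ⟨fun hunit => ?_, ?_⟩
  · obtain ⟨⟨c, hc⟩, hac, hca⟩ := isUnit_iff_exists.1 hunit
    obtain ⟨i, hai, hci⟩ := exists_mem_mem_of_mem_iSup_of_directed hS ha hc
    have hac_one : a * c = 1 := congrArg Subtype.val hac
    have hca_one : c * a = 1 := congrArg Subtype.val hca
    exact (hirr i hai).not_isUnit <| isUnit_iff_exists.2
      ⟨⟨c, hci⟩, Subtype.ext hac_one, Subtype.ext hca_one⟩
  · rintro ⟨x, hx⟩ ⟨y, hy⟩ hxy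
    obtain rfl : a = x * y := congrArg Subtype.val hxy
    obtain ⟨i, hxi, hyi⟩ := exists_mem_mem_of_mem_iSup_of_directed hS hx hy
    have hunit : IsUnit (⟨x, hxi⟩ : S i) ∨ IsUnit (⟨y, hyi⟩ : S i) :=
      (hirr i (mul_mem hxi hyi)).isUnit_or_isUnit rfl
    exact hunit.imp (IsUnit.map (Submonoid.inclusion (le_iSup S i)))
      (IsUnit.map (Submonoid.inclusion (le_iSup S i)))

end DirectedUnion

section Admissible

variable {G : Type*} [CommGroup G]

theorem Prec.refl (S : Submonoid G) : Prec S S :=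
  ⟨le_rfl, fun _ _ hu => hu⟩

variable {N : Submonoid G} {ι : Sort*} [Nonempty ι] {S : ι → Submonoid G}

theorem unitReflecting_iSup_of_directed (hS : Directed (· ≤ ·) S)
    (hrefl : ∀ i, UnitReflecting N (S i)) : UnitReflecting N (⨆ i, S i) := by
  intro u hu huinv
  obtain ⟨i, hui, huinvi⟩ := exists_mem_mem_of_mem_iSup_of_directed hS hu huinv
  exact hrefl i u hui huinvi

theorem omegaAdmissible_iSup_of_directed {Ω : Set (Multiset (Associates N))}
    (hS : Directed (· ≤ ·) S) (hadm : ∀ i, OmegaAdmissible N (S i) Ω) :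
    OmegaAdmissible N (⨆ i, S i) Ω := by
  refine ⟨?_, unitReflecting_iSup_of_directed hS fun i => (hadm i).2.1, fun a haN haS hz => ?_⟩
  · obtain ⟨i⟩ := ‹Nonempty ι›
    exact (hadm i).1.trans (le_iSup S i)
  · exact irreducible_associatesMk_iff.2 <| irreducible_iSup_of_directed hS haS fun i hai =>
      irreducible_associatesMk_iff.1 ((hadm i).2.2 a haN hai hz)

theorem prec_iSup_of_directed (hS : Directed Prec S) (i : ι) : Prec (S i) (⨆ i, S i) := by
  refine ⟨le_iSup S i, fun u hu huinv => ?_⟩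
  obtain ⟨j, huinvj⟩ :=
    (Submonoid.mem_iSup_of_directed (hS.mono fun _ _ hprec => hprec.1)).1 huinv
  obtain ⟨k, hik, hjk⟩ := hS i j
  exact hik.2 u hu (hjk.1 huinvj)

end Admissible

theorem chain_union_general {G : Type*} [CommGroup G] (N : Submonoid G)
    (Ω : Set (Multiset (Associates N))) {ι : Sort*} [Nonempty ι] (S : ι → Submonoid G)
    (hadm : ∀ i, OmegaAdmissible N (S i) Ω) (hdir : Directed Prec S) :
    ∃ T : Submonoid G, (T : Set G) = ⋃ i, (S i : Set G) ∧
      OmegaAdmissible N T Ω ∧ ∀ i, Prec (S i) T :=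
  have hle : Directed (· ≤ ·) S := hdir.mono fun _ _ hprec => hprec.1
  ⟨⨆ i, S i, Submonoid.coe_iSup_of_directed hle, omegaAdmissible_iSup_of_directed hle hadm,
    prec_iSup_of_directed hdir⟩

/-- Chain unions: the union of a nonempty `Prec`-chain of `Ω`-admissible submonoids
over `N` is an `Ω`-admissible submonoid over `N` and a `Prec`-upper bound. -/
theorem chain_union {G : Type*} [CommGroup G] (N : Submonoid G) (b : G) (hb : b ∈ N)
    (ℓ : ℕ) (Ω : Set (Multiset (Associates N))) (hΩ : Ω ⊆ ZSetLen N ⟨b, hb⟩ ℓ)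
    {ι : Type*} [Nonempty ι] (S : ι → Submonoid G)
    (hadm : ∀ i, OmegaAdmissible N (S i) Ω)
    (hchain : ∀ i j, Prec (S i) (S j) ∨ Prec (S j) (S i)) :
    ∃ T : Submonoid G, (T : Set G) = ⋃ i, (S i : Set G) ∧
      OmegaAdmissible N T Ω ∧ ∀ i, Prec (S i) T :=
  chain_union_general N Ω S hadm fun i j =>
    (hchain i j).elim (fun hij => ⟨j, hij, .refl _⟩) fun hji => ⟨i, .refl _, hji⟩
end

section
/- Let G be a commutative group, S ≤ G a submonoid, and b ∈ S with b⁻¹ ∉ S (b is not a unit of ↥S). Let u ∈ G satisfy condition (i) or condition (ii), set w = b^2 * u and S' = S ⊔ Submonoid.powers w. Then an element of S' is a unit of ↥S' if and only if it lies in S and is a unit of ↥S; moreover w is not a unit of ↥S'. -/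
/-!
If `s * w ^ k` has inverse `t * w ^ l` in `S ⊔ powers w`, then `w ^ (k + l) * (s * t) = 1`, so new
units can only appear if some positive power of `w` has its inverse in `S`. Let `w = c * u` with
`c ∈ S`, and suppose `w ^ n` is such a power. Then `(u ^ n)⁻¹ ∈ S`, against condition (ii); under
condition (i), raising to the power `n₀` turns the factor `u ^ n` into `(u ^ n₀) ^ n ∈ S`, so `c`
would be a unit of `S`.
-/

theorem mem_sup_powers {M : Type*} [CommMonoid M] {S : Submonoid M} {w x : M} :
    x ∈ S ⊔ Submonoid.powers w ↔ ∃ s ∈ S, ∃ n : ℕ, s * w ^ n = x := by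
  simp only [Submonoid.mem_sup, Submonoid.mem_powers_iff, exists_exists_eq_and]

section

variable {G : Type*} [CommGroup G] {S T : Submonoid G} {w x y : G} {n : ℕ}

theorem isUnitIn_iff_exists_mul_eq_one : IsUnitIn S x ↔ ∃ q ∈ S, x * q = 1 := by
  simp only [IsUnitIn, mul_eq_one_iff_inv_eq, exists_eq_right']

theorem IsUnitIn.mono (hST : S ≤ T) (hx : IsUnitIn S x) : IsUnitIn T x :=
  hST hx

theorem IsUnitIn.pow (hx : IsUnitIn S x) (n : ℕ) : IsUnitIn S (x ^ n) := by
  simpa only [IsUnitIn, inv_pow] using S.pow_mem hx n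

theorem IsUnitIn.of_mul_right (hxy : IsUnitIn S (x * y)) (hy : y ∈ S) : IsUnitIn S x := by
  simpa only [IsUnitIn, mul_inv, inv_mul_cancel_right] using S.mul_mem hxy hy

theorem IsUnitIn.of_pow (hxn : IsUnitIn S (x ^ n)) (hx : x ∈ S) (hn : n ≠ 0) :
    IsUnitIn S x := by
  rw [← mul_pow_sub_one hn] at hxn
  exact hxn.of_mul_right (S.pow_mem hx _)

theorem isUnitIn_sup_powers_iff (hw : ∀ n : ℕ, 1 ≤ n → ¬ IsUnitIn S (w ^ n))
    (hx : x ∈ S ⊔ Submonoid.powers w) :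
    IsUnitIn (S ⊔ Submonoid.powers w) x ↔ x ∈ S ∧ IsUnitIn S x := by
  refine ⟨fun hunit => ?_, fun h => h.2.mono le_sup_left⟩
  obtain ⟨s, hs, k, rfl⟩ := mem_sup_powers.1 hx
  obtain ⟨y, hy, hxy⟩ := isUnitIn_iff_exists_mul_eq_one.1 hunit
  obtain ⟨t, ht, l, rfl⟩ := mem_sup_powers.1 hy
  have hpow : IsUnitIn S (w ^ (k + l)) := by
    refine isUnitIn_iff_exists_mul_eq_one.2 ⟨s * t, S.mul_mem hs ht, ?_⟩
    rw [← hxy, pow_add, mul_comm, mul_mul_mul_comm]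
  have hkl : k + l = 0 := by
    by_contra hkl
    exact hw _ (Nat.one_le_iff_ne_zero.2 hkl) hpow
  obtain ⟨rfl, rfl⟩ := Nat.add_eq_zero_iff.1 hkl
  simp only [pow_zero, mul_one] at hxy ⊢
  exact ⟨hs, isUnitIn_iff_exists_mul_eq_one.2 ⟨t, ht, hxy⟩⟩

theorem not_isUnitIn_sup_powers (hw : ∀ n : ℕ, 1 ≤ n → ¬ IsUnitIn S (w ^ n)) :
    ¬ IsUnitIn (S ⊔ Submonoid.powers w) w := by
  intro hunit
  have hmem : w ∈ S ⊔ Submonoid.powers w :=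
    Submonoid.mem_sup_right (Submonoid.mem_powers w)
  refine hw 1 le_rfl ?_
  simpa only [pow_one] using ((isUnitIn_sup_powers_iff hw hmem).1 hunit).2

theorem not_isUnitIn_mul_pow_of_pow_mem {c u : G} {m : ℕ} (hc : c ∈ S)
    (hcu : ¬ IsUnitIn S c) (hm : m ≠ 0) (hum : u ^ m ∈ S) (hn : n ≠ 0) :
    ¬ IsUnitIn S ((c * u) ^ n) := by
  intro hunit
  have hpow : IsUnitIn S (c ^ (n * m) * (u ^ m) ^ n) := by
    rw [← pow_mul, mul_comm m n, ← mul_pow, pow_mul]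
    exact hunit.pow m
  exact hcu ((hpow.of_mul_right (S.pow_mem hum n)).of_pow hc (mul_ne_zero hn hm))

theorem not_isUnitIn_mul_pow_of_not_isUnitIn_pow {c u : G} (hc : c ∈ S)
    (hu : ¬ IsUnitIn S (u ^ n)) :
    ¬ IsUnitIn S ((c * u) ^ n) := by
  rw [mul_comm, mul_pow]
  exact fun hunit => hu (hunit.of_mul_right (S.pow_mem hc n))

theorem no_new_units_general {c u : G} (hc : c ∈ S) (hcu : ¬ IsUnitIn S c)
    (hcond : (∃ n₀ : ℕ, 1 ≤ n₀ ∧ u ^ n₀ ∈ S) ∨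
      (∀ n : ℕ, 1 ≤ n → ∀ q ∈ S, u ^ n * q ≠ 1)) :
    (∀ x ∈ S ⊔ Submonoid.powers (c * u),
        (IsUnitIn (S ⊔ Submonoid.powers (c * u)) x ↔ x ∈ S ∧ IsUnitIn S x)) ∧
    ¬ IsUnitIn (S ⊔ Submonoid.powers (c * u)) (c * u) := by
  have hw : ∀ n : ℕ, 1 ≤ n → ¬ IsUnitIn S ((c * u) ^ n) := by
    intro n hn
    rcases hcond with ⟨m, hm, hum⟩ | hfree
    · exact not_isUnitIn_mul_pow_of_pow_mem hc hcu (Nat.one_le_iff_ne_zero.1 hm) hum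
        (Nat.one_le_iff_ne_zero.1 hn)
    · refine not_isUnitIn_mul_pow_of_not_isUnitIn_pow hc fun hunit => ?_
      obtain ⟨q, hq, huq⟩ := isUnitIn_iff_exists_mul_eq_one.1 hunit
      exact hfree n hn q hq huq
  exact ⟨fun _ hx => isUnitIn_sup_powers_iff hw hx, not_isUnitIn_sup_powers hw⟩

end

/-- No new units: if `b ∈ S` is not a unit of `↥S` and `u` satisfies condition (i)
(`u^{n₀} ∈ S` for some `n₀ ≥ 1`) or condition (ii) (`u^n * q ≠ 1` for all `n ≥ 1`,
`q ∈ S`), then with `w = b^2 * u` and `S' = S ⊔ powers w`, an element of `S'` is a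
unit of `↥S'` iff it lies in `S` and is a unit of `↥S`; moreover `w` is not a unit
of `↥S'`. -/
theorem no_new_units {G : Type*} [CommGroup G] (S : Submonoid G) (b : G)
    (hb : b ∈ S) (hbu : b⁻¹ ∉ S) (u : G)
    (hcond : (∃ n₀ : ℕ, 1 ≤ n₀ ∧ u ^ n₀ ∈ S) ∨
      (∀ n : ℕ, 1 ≤ n → ∀ q ∈ S, u ^ n * q ≠ 1)) :
    (∀ x ∈ S ⊔ Submonoid.powers (b ^ 2 * u),
        (IsUnitIn (S ⊔ Submonoid.powers (b ^ 2 * u)) x ↔ x ∈ S ∧ IsUnitIn S x)) ∧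
    ¬ IsUnitIn (S ⊔ Submonoid.powers (b ^ 2 * u)) (b ^ 2 * u) := by
  have hb_sq : ¬ IsUnitIn S (b ^ 2) := fun hunit => hbu (hunit.of_pow hb two_ne_zero)
  exact no_new_units_general (S.pow_mem hb 2) hb_sq hcond
end
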